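/- Let r ≥ 1 and let H be any finite simple graph on r vertices, with e edges, n₃ triangles, and n₂ three-element vertex subsets spanning exactly two edges. For 1 ≤ l ≤ r set x_l = ∑_{i=1}^{l} C(r_i^{(l)}, 2) and y_l = 3·∑_{i=1}^{l} C(r_i^{(l)}, 3), where r_i^{(l)} = ⌊(r+i−1)/l⌋ (these are the edge and weighted-triangle counts of the disjoint union of l balanced complete graphs on r vertices). Then for every 1 ≤ l ≤ r−1, the point (e, 3n₃ + 2n₂) lies on or above the line through (x_l, y_l) and (x_{l+1}, y_{l+1}); that is, (e − x_{l+1})·(y_l − y_{l+1}) ≤ (3n₃ + 2n₂ − y_{l+1})·(x_l − x_{l+1}). -/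

import Mathlib

open SimpleGraph

/-- The number of edges of `H` spanned by a finset `s` of vertices (i.e. with both
endpoints in `s`). -/
noncomputable def spannedEdges {V : Type*} (H : SimpleGraph V) (s : Finset V) : ℕ :=
  Nat.card {e : Sym2 V // e ∈ H.edgeSet ∧ ∀ v ∈ e, v ∈ s}

/-- `nCount H i` is the number of 3-element vertex subsets of `H` spanning exactly `i` edges. -/
noncomputable def nCount {V : Type*} (H : SimpleGraph V) (i : ℕ) : ℕ :=
  Nat.card {s : Finset V // s.card = 3 ∧ spannedEdges H s = i}

/-- `xCoord r l = ∑_{i=1}^{l} C(r_i, 2)` where `r_i = ⌊(r+i-1)/l⌋` is the balanced partition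
of `r` into `l` parts: the number of edges of a disjoint union of `l` balanced cliques. -/
def xCoord (r l : ℕ) : ℕ := ∑ i ∈ Finset.range l, ((r + i) / l).choose 2

/-- `yCoord r l = 3·∑_{i=1}^{l} C(r_i, 3)` where `r_i = ⌊(r+i-1)/l⌋`: the weighted
triangle count of a disjoint union of `l` balanced cliques on `r` vertices. -/
def yCoord (r l : ℕ) : ℕ := 3 * ∑ i ∈ Finset.range l, ((r + i) / l).choose 3

open Finset

section Numeric

/-- The sum of the squares of the parts of the balanced partition of `r` into `k` parts. -/
def balancedSq (r k : ℕ) : ℤ :=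
  (2 * (r / k : ℕ) + 1) * r - (r / k : ℕ) * ((r / k : ℕ) + 1) * k

/-- The sum of the cubes of the parts of the balanced partition of `r` into `k` parts. -/
def balancedCube (r k : ℕ) : ℤ :=
  (2 * (r / k : ℕ) + 1) * balancedSq r k - (r / k : ℕ) * ((r / k : ℕ) + 1) * r

lemma div_bounds (r : ℕ) {k : ℕ} (hk : 0 < k) :
    ((r / k : ℕ) : ℤ) * k ≤ r ∧ (r : ℤ) ≤ ((r / k : ℕ) + 1) * k := by
  have h1 := Nat.div_mul_le_self r k
  have h2 := Nat.lt_div_mul_add hk (a := r)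
  constructor
  · exact_mod_cast h1
  · have : r ≤ (r / k + 1) * k := by rw [add_mul]; omega
    exact_mod_cast this

/-- The common step in the comparison of two consecutive-integer tangents. -/
lemma sub_mul_sub_nonneg {q Q A B : ℤ} (hB : 0 ≤ B) (h1 : q * B ≤ A) (h2 : A ≤ (q + 1) * B) :
    0 ≤ (q - Q) * (2 * A - (q + Q + 1) * B) := by
  rcases lt_trichotomy q Q with h | h | h
  · apply mul_nonneg_of_nonpos_of_nonpos (by omega)
    nlinarith
  · simp [h]
  · apply mul_nonneg (by omega)
    nlinarith

lemma le_balancedSq (r : ℕ) {k : ℕ} (hk : 0 < k) (Q : ℤ) :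
    (2 * Q + 1) * r - Q * (Q + 1) * k ≤ balancedSq r k := by
  obtain ⟨h1, h2⟩ := div_bounds r hk
  have := sub_mul_sub_nonneg (Q := Q) (by positivity) h1 h2
  unfold balancedSq
  linarith

lemma le_balancedCube (r : ℕ) {k : ℕ} (hk : 0 < k) (Q : ℤ) :
    (2 * Q + 1) * balancedSq r k - Q * (Q + 1) * r ≤ balancedCube r k := by
  obtain ⟨h1, h2⟩ := div_bounds r hk
  have h3 : ((r / k : ℕ) : ℤ) * r ≤ balancedSq r k := by
    unfold balancedSq
    nlinarith
  have h4 : balancedSq r k ≤ ((r / k : ℕ) + 1) * (r : ℤ) := by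
    unfold balancedSq
    nlinarith
  have := sub_mul_sub_nonneg (Q := Q) (by positivity) h3 h4
  unfold balancedCube
  linarith

lemma balancedSq_succ_lt {r k : ℕ} (hk : 0 < k) (hkr : k < r) :
    balancedSq r (k + 1) < balancedSq r k := by
  have h := le_balancedSq r hk (r / (k + 1) : ℕ)
  have hq : 0 < r / (k + 1) := Nat.div_pos hkr (by omega)
  have hq' : (0 : ℤ) < (r / (k + 1) : ℕ) := by exact_mod_cast hq
  have : balancedSq r (k + 1) = (2 * (r / (k + 1) : ℕ) + 1) * r
      - (r / (k + 1) : ℕ) * ((r / (k + 1) : ℕ) + 1) * (k + 1) := by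
    simp [balancedSq]
  nlinarith

lemma balancedSq_anti {r k m : ℕ} (hk : 0 < k) (hkm : k ≤ m) (hmr : m ≤ r) :
    balancedSq r m ≤ balancedSq r k := by
  induction m, hkm using Nat.le_induction with
  | base => rfl
  | succ n hn ih => exact (balancedSq_succ_lt (by omega) hmr).le.trans (ih (by omega))

/-- The points of balanced partitions are in convex position. -/
lemma balanced_above_chord {r k l : ℕ} (hl : 0 < l) (hlr : l < r) (hk : 0 < k) (hkr : k ≤ r) :
    (balancedSq r k - balancedSq r (l + 1)) * (balancedCube r l - balancedCube r (l + 1)) ≤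
      (balancedCube r k - balancedCube r (l + 1)) * (balancedSq r l - balancedSq r (l + 1)) := by
  have hpos := balancedSq_succ_lt hl hlr
  rcases le_or_gt k l with h | h
  · have h1 := balancedSq_anti hk h hlr.le
    have h2 := le_balancedCube r hk (r / l : ℕ)
    have h3 := le_balancedCube r (Nat.succ_pos l) (r / l : ℕ)
    have h4 : balancedCube r l = (2 * (r / l : ℕ) + 1) * balancedSq r l -
      (r / l : ℕ) * ((r / l : ℕ) + 1) * r := rfl
    have h5 : balancedCube r l - balancedCube r (l + 1) ≤
      (2 * (r / l : ℕ) + 1) * (balancedSq r l - balancedSq r (l + 1)) := by linarith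
    have h6 : (2 * (r / l : ℕ) + 1) * (balancedSq r k - balancedSq r l) ≤
      balancedCube r k - balancedCube r l := by linarith
    have h7 := mul_le_mul_of_nonneg_left h5 (sub_nonneg.2 h1)
    have h8 := mul_le_mul_of_nonneg_right h6 (sub_nonneg.2 hpos.le)
    linarith
  · have h1 := balancedSq_anti (Nat.succ_pos l) h hkr
    have h2 := le_balancedCube r hk (r / (l + 1) : ℕ)
    have h3 := le_balancedCube r hl (r / (l + 1) : ℕ)
    have h4 : balancedCube r (l + 1) = (2 * (r / (l + 1) : ℕ) + 1) * balancedSq r (l + 1) -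
      (r / (l + 1) : ℕ) * ((r / (l + 1) : ℕ) + 1) * r := rfl
    have h5 : (2 * (r / (l + 1) : ℕ) + 1) * (balancedSq r l - balancedSq r (l + 1)) ≤
      balancedCube r l - balancedCube r (l + 1) := by linarith
    have h6 : (2 * (r / (l + 1) : ℕ) + 1) * (balancedSq r k - balancedSq r (l + 1)) ≤
      balancedCube r k - balancedCube r (l + 1) := by linarith
    have h7 := mul_le_mul_of_nonneg_left h5 (sub_nonneg.2 h1)
    have h8 := mul_le_mul_of_nonneg_right h6 (sub_nonneg.2 hpos.le)
    linarith

lemma sum_range_add_div (r : ℕ) {l : ℕ} (hl : 0 < l) : ∑ i ∈ range l, (r + i) / l = r := by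
  induction r with
  | zero =>
    refine sum_eq_zero fun i hi => ?_
    simpa using Or.inr (mem_range.1 hi)
  | succ r ih =>
    have h1 := sum_range_succ (fun i => (r + i) / l) l
    rw [sum_range_succ' (fun i => (r + i) / l) l, ih, Nat.add_div_right _ hl] at h1
    have h2 : ∑ i ∈ range l, (r + 1 + i) / l = ∑ i ∈ range l, (r + (i + 1)) / l :=
      sum_congr rfl fun i _ => by congr 1; ring
    simp only [add_zero] at h1
    omega

/-- If every part is `q` or `q + 1`, the sum of squares is determined by the number of
parts, and the sum of cubes by the sum of squares. -/
lemma sum_sq_cube_of_mem {ι : Type*} (s : Finset ι) (a : ι → ℕ) (q : ℕ)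
    (h : ∀ i ∈ s, a i = q ∨ a i = q + 1) :
    (∑ i ∈ s, (a i : ℤ) ^ 2 = (2 * q + 1) * ∑ i ∈ s, (a i : ℤ) - q * (q + 1) * #s) ∧
    (∑ i ∈ s, (a i : ℤ) ^ 3 =
      (2 * q + 1) * ∑ i ∈ s, (a i : ℤ) ^ 2 - q * (q + 1) * ∑ i ∈ s, (a i : ℤ)) := by
  constructor
  · rw [mul_sum, mul_comm _ (#s : ℤ), ← nsmul_eq_mul, ← sum_const, ← sum_sub_distrib]
    refine sum_congr rfl fun i hi => ?_
    rcases h i hi with h | h <;> rw [h] <;> push_cast <;> ring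
  · rw [mul_sum, mul_sum, ← sum_sub_distrib]
    refine sum_congr rfl fun i hi => ?_
    rcases h i hi with h | h <;> rw [h] <;> push_cast <;> ring

lemma balanced_of_mem {ι : Type*} (s : Finset ι) (a : ι → ℕ) (q r : ℕ)
    (h : ∀ i ∈ s, a i = q ∨ a i = q + 1) (hq : ∃ i ∈ s, a i = q) (hr : ∑ i ∈ s, a i = r) :
    ∑ i ∈ s, (a i : ℤ) ^ 2 = balancedSq r #s ∧ ∑ i ∈ s, (a i : ℤ) ^ 3 = balancedCube r #s := by
  have hr' : ∑ i ∈ s, (a i : ℤ) = r := by exact_mod_cast hr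
  have hdiv : r / #s = q := by
    apply Nat.div_eq_of_lt_le
    · rw [← hr, mul_comm, ← smul_eq_mul]
      exact card_nsmul_le_sum s a q fun i hi => by rcases h i hi with h | h <;> omega
    · rw [← hr, mul_comm, ← smul_eq_mul, ← sum_const]
      obtain ⟨i, hi, hi'⟩ := hq
      exact sum_lt_sum (fun i hi => by rcases h i hi with h | h <;> omega) ⟨i, hi, by omega⟩
  obtain ⟨h1, h2⟩ := sum_sq_cube_of_mem s a q h
  rw [hr'] at h1 h2
  have h3 : ∑ i ∈ s, (a i : ℤ) ^ 2 = balancedSq r #s := by rw [h1, balancedSq, hdiv]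
  exact ⟨h3, by rw [h2, h3, balancedCube, hdiv]⟩

lemma balanced_eq_sum (r : ℕ) {l : ℕ} (hl : 0 < l) :
    ∑ i ∈ range l, (((r + i) / l : ℕ) : ℤ) ^ 2 = balancedSq r l ∧
      ∑ i ∈ range l, (((r + i) / l : ℕ) : ℤ) ^ 3 = balancedCube r l := by
  have := balanced_of_mem (range l) (fun i => (r + i) / l) (r / l) r
    (fun i hi => by
      have hi := mem_range.1 hi
      have h1 : r / l ≤ (r + i) / l := Nat.div_le_div_right (by omega)
      have h2 : (r + i) / l ≤ (r + l) / l := Nat.div_le_div_right (by omega)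
      rw [Nat.add_div_right _ hl] at h2
      omega) ⟨0, by simpa, by simp⟩ (sum_range_add_div r hl)
  simpa using this

lemma two_mul_choose_two (n : ℕ) : 2 * (n.choose 2 : ℤ) = n ^ 2 - n := by
  induction n with
  | zero => simp
  | succ n ih => rw [Nat.choose_succ_succ']; push_cast; simp; linarith

lemma six_mul_choose_three (n : ℕ) : 6 * (n.choose 3 : ℤ) = n ^ 3 - 3 * n ^ 2 + 2 * n := by
  induction n with
  | zero => simp
  | succ n ih =>
    have := two_mul_choose_two n
    rw [Nat.choose_succ_succ']; push_cast; linarith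

lemma two_mul_xCoord (r : ℕ) {l : ℕ} (hl : 0 < l) :
    2 * (xCoord r l : ℤ) = balancedSq r l - r := by
  have h : ∑ i ∈ range l, (((r + i) / l : ℕ) : ℤ) = r := by exact_mod_cast sum_range_add_div r hl
  rw [← (balanced_eq_sum r hl).1, xCoord]
  conv_rhs => rw [← h]
  rw [Nat.cast_sum, mul_sum, ← sum_sub_distrib]
  exact sum_congr rfl fun i _ => two_mul_choose_two _

lemma two_mul_yCoord (r : ℕ) {l : ℕ} (hl : 0 < l) :
    2 * (yCoord r l : ℤ) = balancedCube r l - 3 * balancedSq r l + 2 * r := by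
  have h : ∑ i ∈ range l, (((r + i) / l : ℕ) : ℤ) = r := by exact_mod_cast sum_range_add_div r hl
  rw [← (balanced_eq_sum r hl).1, ← (balanced_eq_sum r hl).2, yCoord]
  conv_rhs => rw [← h]
  push_cast
  rw [← mul_assoc, mul_sum, mul_sum, mul_sum, ← sum_sub_distrib, ← sum_add_distrib]
  exact sum_congr rfl fun i _ => by
    have := six_mul_choose_three ((r + i) / l)
    push_cast at this
    linarith

end Numeric

section Partition

variable {ι : Type*} [Fintype ι] [DecidableEq ι]

lemma sum_update_update (a : ι → ℕ) {i j : ι} (hij : i ≠ j) (u w : ℕ) (g : ℕ → ℤ) :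
    ∑ x, g (Function.update (Function.update a i u) j w x) =
      ∑ x, g (a x) + (g u - g (a i)) + (g w - g (a j)) := by
  have : ∀ x, g (Function.update (Function.update a i u) j w x) =
      g (a x) + (if x = i then g u - g (a i) else 0) + (if x = j then g w - g (a j) else 0) := by
    intro x
    by_cases hj : x = j
    · subst hj
      simp [hij.symm]
    · by_cases hi : x = i
      · subst hi
        simp [hij]
      · simp [hi, hj]
  simp [this, sum_add_distrib]

/-- A partition minimising `α ∑ a³ - β ∑ a²`, and `∑ a²` among those, has parts differing by
at most one. -/
lemma parts_close_of_minimal {r : ℕ} {α β : ℤ} (a : ι → ℕ) (har : ∑ x, a x = r)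
    (hmin : ∀ a' : ι → ℕ, ∑ x, a' x = r →
      α * ∑ x, (a x : ℤ) ^ 3 - β * ∑ x, (a x : ℤ) ^ 2 ≤
        α * ∑ x, (a' x : ℤ) ^ 3 - β * ∑ x, (a' x : ℤ) ^ 2)
    (hmin' : ∀ a' : ι → ℕ, ∑ x, a' x = r →
      α * ∑ x, (a' x : ℤ) ^ 3 - β * ∑ x, (a' x : ℤ) ^ 2 ≤
        α * ∑ x, (a x : ℤ) ^ 3 - β * ∑ x, (a x : ℤ) ^ 2 →
      ∑ x, (a x : ℤ) ^ 2 ≤ ∑ x, (a' x : ℤ) ^ 2)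
    {i j : ι} (hi : a i ≠ 0) : a j ≤ a i + 1 := by
  by_contra! hlt
  have hij : i ≠ j := by rintro rfl; omega
  have key : ∀ u w : ℕ, u + w = a i + a j →
      ∑ x, Function.update (Function.update a i u) j w x = r := by
    intro u w h
    have := sum_update_update a hij u w (fun n => (n : ℤ))
    zify at h har ⊢
    linarith
  have hsq := fun u w => sum_update_update a hij u w (fun n => (n : ℤ) ^ 2)
  have hcb := fun u w => sum_update_update a hij u w (fun n => (n : ℤ) ^ 3)
  have hmerge := hmin _ (key 0 (a i + a j) (by omega))
  have hbal := hmin _ (key (a i + 1) (a j - 1) (by omega))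
  have hbal' := hmin' _ (key (a i + 1) (a j - 1) (by omega))
  rw [hsq, hcb] at hmerge hbal hbal'
  obtain ⟨d, hd⟩ : ∃ d, a j = a i + 2 + d := ⟨a j - a i - 2, by omega⟩
  have e1 : ((a j - 1 : ℕ) : ℤ) = a i + 1 + d := by rw [hd]; omega
  have e2 : (a j : ℤ) = a i + 2 + d := by rw [hd]; push_cast; ring
  have hp : (0 : ℤ) < a i := by exact_mod_cast Nat.pos_of_ne_zero hi
  simp only [e1, e2, Nat.cast_add, Nat.cast_one, Nat.cast_zero] at hmerge hbal hbal'
  generalize (a i : ℤ) = p at *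
  generalize ∑ x, (a x : ℤ) ^ 3 = S₃ at *
  generalize ∑ x, (a x : ℤ) ^ 2 = S₂ at *
  have hd0 : (0 : ℤ) ≤ d := by positivity
  generalize (d : ℤ) = t at *
  have h1 : 0 ≤ (3 * α * (2 * p + 2 + t) - 2 * β) * (p * (p + 2 + t)) := by linarith
  have h2 : 0 ≤ (2 * β - 3 * α * (2 * p + 2 + t)) * (1 + t) := by linarith
  have h3 : 0 ≤ 3 * α * (2 * p + 2 + t) - 2 * β := nonneg_of_mul_nonneg_left h1 (by positivity)
  have h4 : 0 ≤ 2 * β - 3 * α * (2 * p + 2 + t) := nonneg_of_mul_nonneg_left h2 (by positivity)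
  have h5 : 2 * β = 3 * α * (2 * p + 2 + t) := by linarith
  have h6 := hbal' (by nlinarith)
  nlinarith

/-- A linear functional of `(∑ a², ∑ a³)` is minimised over partitions by a balanced one. -/
lemma partition_ge_of_balanced {r : ℕ} (hr : 0 < r) {α β c : ℤ}
    (hbal : ∀ k, 0 < k → k ≤ r → c ≤ α * balancedCube r k - β * balancedSq r k)
    (a : ι → ℕ) (har : ∑ x, a x = r) :
    c ≤ α * ∑ x, (a x : ℤ) ^ 3 - β * ∑ x, (a x : ℤ) ^ 2 := by
  set F : (ι → ℕ) → ℤ := fun a => α * ∑ x, (a x : ℤ) ^ 3 - β * ∑ x, (a x : ℤ) ^ 2 with hF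
  have hmem : ∀ b : ι → ℕ, b ∈ piAntidiag univ r ↔ ∑ x, b x = r := by simp
  obtain ⟨b, hb, hbmin⟩ := exists_min_image (piAntidiag univ r)
    (fun b => toLex (F b, ∑ x, (b x : ℤ) ^ 2)) ⟨a, (hmem a).2 har⟩
  simp only [hmem, Prod.Lex.toLex_le_toLex] at hb hbmin
  have hFmin : ∀ b', ∑ x, b' x = r → F b ≤ F b' := fun b' hb' => by
    rcases hbmin b' hb' with h | h
    exacts [h.le, h.1.le]
  refine le_trans ?_ (hFmin a har)
  have hclose : ∀ i j, b i ≠ 0 → b j ≤ b i + 1 := fun i j hi =>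
    parts_close_of_minimal b hb hFmin (fun b' hb' hle => by
      rcases hbmin b' hb' with h | h
      exacts [absurd h (not_lt.2 hle), h.2]) hi
  set s := univ.filter fun x => b x ≠ 0 with hs
  have hne : s.Nonempty := by
    by_contra! h
    have : ∑ x, b x = 0 := sum_eq_zero fun x _ => by
      by_contra hx
      have : x ∈ s := by simp [hs, hx]
      simp [h] at this
    omega
  have hsum : ∀ g : ℕ → ℤ, g 0 = 0 → ∑ x ∈ s, g (b x) = ∑ x, g (b x) := fun g hg =>
    sum_subset (subset_univ s) fun x _ hx => by
      have : b x = 0 := by simpa [hs] using hx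
      rw [this, hg]
  obtain ⟨i, his, himin⟩ := exists_min_image s b hne
  have hi0 : b i ≠ 0 := (mem_filter.1 his).2
  have hbs : ∑ x ∈ s, b x = r := by
    have := hsum (fun n => (n : ℤ)) (by simp)
    zify at hb ⊢
    exact this.trans hb
  obtain ⟨h2, h3⟩ := balanced_of_mem s b (b i) r
    (fun j hj => by
      have := himin j hj
      have := hclose i j hi0
      omega) ⟨i, his, rfl⟩ hbs
  rw [hsum (fun n => (n : ℤ) ^ 2) (by simp)] at h2
  rw [hsum (fun n => (n : ℤ) ^ 3) (by simp)] at h3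
  have hcard : #s ≤ r := by
    rw [← hbs, card_eq_sum_ones]
    exact sum_le_sum fun x hx => Nat.one_le_iff_ne_zero.2 (mem_filter.1 hx).2
  simp only [hF, h2, h3]
  exact hbal _ hne.card_pos hcard

end Partition

section ClosedAdjacency

variable {V : Type*}

open Classical in
/-- The indicator of closed adjacency (equal or adjacent). -/
noncomputable def closedAdj (H : SimpleGraph V) (x y : V) : ℤ := if x = y ∨ H.Adj x y then 1 else 0

/-- The number of ordered pairs of equal or adjacent vertices. -/
noncomputable def closedPairs [Fintype V] (H : SimpleGraph V) : ℤ := ∑ x, ∑ y, closedAdj H x y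

/-- The number of ordered triples `(x, y, z)` with `x, y` equal or adjacent and `z` in the closed
neighbourhood of `x` or `y`. -/
noncomputable def closedTriples [Fintype V] (H : SimpleGraph V) : ℤ :=
  ∑ x, ∑ y, ∑ z, closedAdj H x y *
    (closedAdj H x z + closedAdj H y z - closedAdj H x z * closedAdj H y z)

lemma closedAdj_congr {W : Type*} {H : SimpleGraph V} {G : SimpleGraph W} {x y : V} {z w : W}
    (h : (x = y ∨ H.Adj x y) ↔ (z = w ∨ G.Adj z w)) : closedAdj H x y = closedAdj G z w := by
  classical exact if_congr h rfl rfl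

lemma closedAdj_self (H : SimpleGraph V) (x : V) : closedAdj H x x = 1 := by simp [closedAdj]

lemma closedAdj_comm (H : SimpleGraph V) (x y : V) : closedAdj H x y = closedAdj H y x :=
  closedAdj_congr (or_congr eq_comm (H.adj_comm x y))

lemma closedAdj_mul_self (H : SimpleGraph V) (x y : V) :
    closedAdj H x y * closedAdj H x y = closedAdj H x y := by
  unfold closedAdj
  split_ifs <;> simp

lemma closedAdj_eq_one_iff (H : SimpleGraph V) (x y : V) :
    closedAdj H x y = 1 ↔ x = y ∨ H.Adj x y := by
  unfold closedAdj
  split_ifs with h <;> simp [h]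

/-- The graph whose closed adjacency is the pullback along `σ` of that of `H`. -/
def closedComap (σ : V → V) (H : SimpleGraph V) : SimpleGraph V where
  Adj x y := x ≠ y ∧ (σ x = σ y ∨ H.Adj (σ x) (σ y))
  symm := ⟨fun _ _ h => ⟨h.1.symm, h.2.imp Eq.symm SimpleGraph.Adj.symm⟩⟩
  loopless := ⟨fun _ h => h.1 rfl⟩

lemma closedAdj_closedComap (σ : V → V) (H : SimpleGraph V) (x y : V) :
    closedAdj (closedComap σ H) x y = closedAdj H (σ x) (σ y) := by
  by_cases h : x = y
  · subst h
    rw [closedAdj_self, closedAdj_self]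
  · exact closedAdj_congr (by simp [closedComap, h])

variable [Fintype V]

section Symmetrization

variable [DecidableEq V]

lemma sum_comp_update_id (u v : V) (g : V → ℤ) :
    ∑ x, g (Function.update id u v x) = ∑ x, g x + (g v - g u) := by
  have : ∀ x, g (Function.update id u v x) = g x + if x = u then g v - g u else 0 := by
    intro x
    by_cases h : x = u
    · subst h
      simp
    · simp [h]
  simp [this, sum_add_distrib]

lemma sum_pairs_update_add (f : V → V → ℤ) (u v : V) :
    (∑ x, ∑ y, f (Function.update id u v x) (Function.update id u v y)) +
      ∑ x, ∑ y, f (Function.update id v u x) (Function.update id v u y) =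
    2 * (∑ x, ∑ y, f x y) + 2 * (f u u + f v v - f u v - f v u) := by
  have h : ∀ u v, ∑ x, ∑ y, f (Function.update id u v x) (Function.update id u v y) =
      ∑ x, ∑ y, f x y + ∑ x, (f x v - f x u) + (∑ y, f v y - ∑ y, f u y)
        + (f v v - f v u - (f u v - f u u)) := by
    intro u v
    rw [sum_comp_update_id u v fun x => ∑ y, f x (Function.update id u v y)]
    simp only [sum_comp_update_id u v (f _), sum_add_distrib]
    ring
  rw [h, h]
  simp only [sum_sub_distrib]
  ring

lemma sum_triples_update_add (f : V → V → V → ℤ) (u v : V) :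
    (∑ x, ∑ y, ∑ z, f (Function.update id u v x) (Function.update id u v y)
        (Function.update id u v z)) +
      ∑ x, ∑ y, ∑ z, f (Function.update id v u x) (Function.update id v u y)
        (Function.update id v u z) =
    2 * (∑ x, ∑ y, ∑ z, f x y z) + 2 * ∑ z, ((f u u z + f v v z - f u v z - f v u z) +
      (f u z u + f v z v - f u z v - f v z u) + (f z u u + f z v v - f z u v - f z v u)) := by
  have h : ∀ u v, ∑ x, ∑ y, ∑ z, f (Function.update id u v x) (Function.update id u v y)
        (Function.update id u v z) =
      (∑ x, ∑ y, f (Function.update id u v x) (Function.update id u v y) v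
        - ∑ x, ∑ y, f (Function.update id u v x) (Function.update id u v y) u)
      + ∑ x, ∑ y, ∑ z, f (Function.update id u v x) (Function.update id u v y) z := by
    intro u v
    simp only [sum_comp_update_id u v (f _ _), sum_add_distrib, sum_sub_distrib]
    ring
  have h2 : ∀ (g : V → V → ℤ) (u v), ∑ x, ∑ y, g (Function.update id u v x)
        (Function.update id u v y) =
      ∑ x, ∑ y, g x y + ∑ x, (g x v - g x u) + (∑ y, g v y - ∑ y, g u y)
        + (g v v - g v u - (g u v - g u u)) := by
    intro g u v
    rw [sum_comp_update_id u v fun x => ∑ y, g x (Function.update id u v y)]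
    simp only [sum_comp_update_id u v (g _), sum_add_distrib]
    ring
  rw [h, h, h2 (fun x y => f x y u), h2 (fun x y => f x y v), h2 (fun x y => f x y u),
    h2 (fun x y => f x y v), h2 (fun x y => ∑ z, f x y z), h2 (fun x y => ∑ z, f x y z)]
  simp only [sum_sub_distrib, sum_add_distrib]
  ring

lemma closedPairs_symmetrize (H : SimpleGraph V) {u v : V} (huv : H.Adj u v) :
    closedPairs (closedComap (Function.update id u v) H) +
      closedPairs (closedComap (Function.update id v u) H) = 2 * closedPairs H := by
  have h1 : closedAdj H u v = 1 := (closedAdj_eq_one_iff H u v).2 (Or.inr huv)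
  have h2 : closedAdj H v u = 1 := closedAdj_comm H u v ▸ h1
  simp only [closedPairs, closedAdj_closedComap]
  rw [sum_pairs_update_add, h1, h2, closedAdj_self, closedAdj_self]
  ring

lemma closedTriples_symmetrize (H : SimpleGraph V) {u v : V} (huv : H.Adj u v) :
    closedTriples (closedComap (Function.update id u v) H) +
      closedTriples (closedComap (Function.update id v u) H) =
    2 * closedTriples H - 2 * ∑ z, (closedAdj H u z - closedAdj H v z) ^ 2 := by
  have h1 : closedAdj H u v = 1 := (closedAdj_eq_one_iff H u v).2 (Or.inr huv)
  have h2 : closedAdj H v u = 1 := closedAdj_comm H u v ▸ h1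
  simp only [closedTriples, closedAdj_closedComap]
  rw [sum_triples_update_add (fun x y z => closedAdj H x y *
    (closedAdj H x z + closedAdj H y z - closedAdj H x z * closedAdj H y z)), sub_eq_add_neg,
    ← mul_neg, ← sum_neg_distrib]
  congr 2
  refine sum_congr rfl fun z _ => ?_
  rw [h1, h2, closedAdj_self, closedAdj_self, closedAdj_comm H z u, closedAdj_comm H z v]
  ring

/-- In a minimiser of `α * closedTriples - β * closedPairs`, adjacent vertices are twins. -/
lemma closedAdj_eq_of_minimal {α β : ℤ} (hα : 0 < α) (H : SimpleGraph V)
    (hmin : ∀ H' : SimpleGraph V, α * closedTriples H - β * closedPairs H ≤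
      α * closedTriples H' - β * closedPairs H') {u v : V} (huv : H.Adj u v) (z : V) :
    closedAdj H u z = closedAdj H v z := by
  have h1 := hmin (closedComap (Function.update id u v) H)
  have h2 := hmin (closedComap (Function.update id v u) H)
  have h3 := closedPairs_symmetrize H huv
  have h4 := closedTriples_symmetrize H huv
  have h5 : α * ∑ z, (closedAdj H u z - closedAdj H v z) ^ 2 ≤ 0 := by
    have h6 : 0 ≤ 2 * (-(α * ∑ z, (closedAdj H u z - closedAdj H v z) ^ 2)) := by
      linear_combination h1 + h2 - β * h3 + α * h4
    linarith
  have h6 : ∑ z, (closedAdj H u z - closedAdj H v z) ^ 2 ≤ 0 := by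
    by_contra! h
    exact absurd h5 (not_le.2 (mul_pos hα h))
  have h7 := single_le_sum (f := fun z => (closedAdj H u z - closedAdj H v z) ^ 2)
    (fun z _ => sq_nonneg _) (mem_univ z)
  have h8 := pow_eq_zero_iff two_ne_zero |>.1 (le_antisymm (h7.trans h6) (sq_nonneg _))
  linarith

end Symmetrization

/-- If adjacent vertices are twins, the graph is a disjoint union of cliques, and its statistics
are power sums of the sizes of the cliques. -/
lemma exists_partition_of_twins (H : SimpleGraph V)
    (htwin : ∀ u v, H.Adj u v → ∀ z, closedAdj H u z = closedAdj H v z) :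
    ∃ a : V → ℕ, ∑ x, a x = Fintype.card V ∧ closedPairs H = ∑ x, (a x : ℤ) ^ 2 ∧
      closedTriples H = ∑ x, (a x : ℤ) ^ 3 := by
  classical
  let S : Setoid V := Setoid.ker (closedAdj H)
  have hS : ∀ x y, S x y ↔ closedAdj H x y = 1 := by
    intro x y
    constructor
    · intro h
      have h : closedAdj H x = closedAdj H y := h
      rw [h, closedAdj_self]
    · intro h
      rcases (closedAdj_eq_one_iff H x y).1 h with rfl | h
      · exact S.refl _
      · exact funext (htwin x y h)
  obtain ⟨ρ, hρ⟩ : ∃ ρ : V → V, ∀ x y, closedAdj H x y = if ρ x = ρ y then 1 else 0 := by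
    refine ⟨fun x => (Quotient.mk S x).out, fun x y => ?_⟩
    have : (Quotient.mk S x).out = (Quotient.mk S y).out ↔ closedAdj H x y = 1 := by
      rw [Quotient.out_inj, Quotient.eq]
      exact hS x y
    rw [if_congr this rfl rfl]
    unfold closedAdj
    split_ifs <;> simp_all
  have ha : ∀ z, ((#{x | ρ x = z} : ℕ) : ℤ) = ∑ x, if ρ x = z then 1 else 0 := by
    intro z
    simp
  have hsum : ∀ g : V → ℤ, ∑ z, ((#{x | ρ x = z} : ℕ) : ℤ) * g z = ∑ x, g (ρ x) := by
    intro g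
    simp only [ha, sum_mul]
    rw [sum_comm]
    simp
  refine ⟨fun z => #{x | ρ x = z}, ?_, ?_, ?_⟩
  · exact (card_eq_sum_card_fiberwise fun x _ => mem_univ (ρ x)).symm
  · simp only [sq, hsum]
    refine sum_congr rfl fun x _ => ?_
    rw [ha]
    simp only [hρ, eq_comm]
  · simp only [pow_succ' _ 2, hsum, sq]
    refine sum_congr rfl fun x _ => ?_
    rw [ha, sum_mul_sum]
    refine sum_congr rfl fun y _ => sum_congr rfl fun z _ => ?_
    simp only [hρ]
    by_cases hy : ρ x = ρ y
    · by_cases hz : ρ y = ρ z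
      · simp [hy, hz]
      · simp [hy, hz, Ne.symm hz]
    · simp [hy, Ne.symm hy]

/-- A linear functional of `(closedPairs, closedTriples)` is minimised by a disjoint union of
balanced cliques. -/
lemma closedTriples_ge_of_balanced (H : SimpleGraph V) (hV : 0 < Fintype.card V) {α β c : ℤ}
    (hα : 0 < α) (hbal : ∀ k, 0 < k → k ≤ Fintype.card V →
      c ≤ α * balancedCube (Fintype.card V) k - β * balancedSq (Fintype.card V) k) :
    c ≤ α * closedTriples H - β * closedPairs H := by
  classical
  obtain ⟨H₀, hmin⟩ := Finite.exists_min
    (fun H : SimpleGraph V => α * closedTriples H - β * closedPairs H)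
  obtain ⟨a, ha, h2, h3⟩ := exists_partition_of_twins H₀
    fun u v huv => closedAdj_eq_of_minimal hα H₀ hmin huv
  refine le_trans ?_ (hmin H)
  simp only [h2, h3]
  exact partition_ge_of_balanced hV hbal a ha

end ClosedAdjacency

section Counting

variable {V : Type*}

lemma closedAdj_of_ne (H : SimpleGraph V) [DecidableRel H.Adj] {x y : V} (h : x ≠ y) :
    closedAdj H x y = if H.Adj x y then 1 else 0 := by
  simp [closedAdj, h]

lemma spannedEdges_triple [DecidableEq V] (H : SimpleGraph V) {a b c : V} (hab : a ≠ b)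
    (hac : a ≠ c) (hbc : b ≠ c) :
    (spannedEdges H {a, b, c} : ℤ) = closedAdj H a b + closedAdj H a c + closedAdj H b c := by
  classical
  have hcard : spannedEdges H {a, b, c} =
      #(({s(a, b), s(a, c), s(b, c)} : Finset (Sym2 V)).filter (· ∈ H.edgeSet)) := by
    refine Nat.subtype_card _ fun e => ?_
    induction e with | _ x y
    simp only [mem_filter, SimpleGraph.mem_edgeSet, Sym2.mem_iff, mem_insert,
      mem_singleton, Sym2.eq_iff]
    constructor
    · rintro ⟨h, hxy⟩
      refine ⟨hxy, ?_⟩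
      rintro v (rfl | rfl) <;> tauto
    · rintro ⟨hxy, h⟩
      refine ⟨?_, hxy⟩
      have hne := hxy.ne
      rcases h x (Or.inl rfl) with rfl | rfl | rfl <;>
        rcases h y (Or.inr rfl) with rfl | rfl | rfl <;> simp_all
  rw [hcard, card_filter, sum_insert (by simp; tauto), sum_insert (by simp; tauto), sum_singleton,
    closedAdj_of_ne H hab, closedAdj_of_ne H hac, closedAdj_of_ne H hbc]
  simp [add_assoc]

variable [Fintype V]

lemma closedPairs_eq (H : SimpleGraph V) :
    closedPairs H = 2 * (Nat.card H.edgeSet : ℤ) + Fintype.card V := by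
  classical
  have h : ∀ x y, closedAdj H x y = (if x = y then 1 else 0) + if H.Adj x y then 1 else 0 := by
    intro x y
    by_cases hxy : x = y
    · subst hxy
      simp [closedAdj_self]
    · simp [closedAdj_of_ne H hxy, hxy]
  have hdeg := H.sum_degrees_eq_twice_card_edges
  rw [SimpleGraph.edgeFinset_card, ← Nat.card_eq_fintype_card] at hdeg
  have hA : ∑ x, ∑ y, (if H.Adj x y then 1 else 0 : ℤ) = 2 * (Nat.card H.edgeSet : ℤ) := by
    have hdeg' : ∑ v, (H.degree v : ℤ) = 2 * (Nat.card H.edgeSet : ℤ) := by exact_mod_cast hdeg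
    rw [← hdeg']
    refine sum_congr rfl fun x _ => ?_
    rw [← SimpleGraph.card_neighborFinset_eq_degree, SimpleGraph.neighborFinset_eq_filter]
    simp
  simp only [closedPairs, h, sum_add_distrib, hA]
  simp [add_comm]

/-- The weight of a triple in `closedTriples`. -/
noncomputable def tripleWeight (H : SimpleGraph V) (x y z : V) : ℤ :=
  closedAdj H x y * (closedAdj H x z + closedAdj H y z - closedAdj H x z * closedAdj H y z)

lemma nCount_eq (H : SimpleGraph V) (i : ℕ) :
    (nCount H i : ℤ) = ∑ s ∈ powersetCard 3 univ, if spannedEdges H s = i then 1 else 0 := by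
  classical
  have : nCount H i = #((powersetCard 3 (univ : Finset V)).filter fun s => spannedEdges H s = i) := by
    rw [nCount, Nat.card_eq_fintype_card, Fintype.card_subtype]
    congr 1
    ext s
    simp
  rw [this, card_filter]
  push_cast
  rfl

lemma sum_distinct_triples [DecidableEq V] (f : V → V → V → ℤ) :
    (∑ x, ∑ y, ∑ z, if x ≠ y ∧ x ≠ z ∧ y ≠ z then f x y z else 0) =
      ∑ s ∈ powersetCard 3 univ, ∑ x ∈ s, ∑ y ∈ s, ∑ z ∈ s,
        if x ≠ y ∧ x ≠ z ∧ y ≠ z then f x y z else 0 := by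
  simp only [← sum_product', univ_product_univ]
  simp only [← sum_filter]
  rw [← sum_fiberwise_of_maps_to (t := powersetCard 3 univ)
    (g := fun p : V × V × V => ({p.1, p.2.1, p.2.2} : Finset V))]
  · refine sum_congr rfl fun s hs => ?_
    have hs := (mem_powersetCard.1 hs).2
    refine sum_congr ?_ fun _ _ => rfl
    ext ⟨x, y, z⟩
    simp only [mem_filter, mem_univ, true_and, mem_product]
    constructor
    · rintro ⟨h, rfl⟩
      simp [h]
    · rintro ⟨⟨hx, hy, hz⟩, h⟩
      refine ⟨h, eq_of_subset_of_card_le ?_ ?_⟩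
      · intro w hw
        simp only [mem_insert, mem_singleton] at hw
        rcases hw with rfl | rfl | rfl <;> assumption
      · rw [hs, card_eq_three.2 ⟨x, y, z, h.1, h.2.1, h.2.2, rfl⟩]
  · rintro ⟨x, y, z⟩ h
    have h := (mem_filter.1 h).2
    exact mem_powersetCard.2 ⟨subset_univ _, card_eq_three.2 ⟨x, y, z, h.1, h.2.1, h.2.2, rfl⟩⟩

lemma sum_distinct_tripleWeight [DecidableEq V] (H : SimpleGraph V) :
    (∑ x, ∑ y, ∑ z, if x ≠ y ∧ x ≠ z ∧ y ≠ z then tripleWeight H x y z else 0) =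
      2 * (3 * nCount H 3 + 2 * nCount H 2) := by
  rw [sum_distinct_triples, nCount_eq, nCount_eq, mul_sum, mul_sum, ← sum_add_distrib, mul_sum]
  refine sum_congr rfl fun s hs => ?_
  obtain ⟨a, b, c, hab, hac, hbc, rfl⟩ := card_eq_three.1 (mem_powersetCard.1 hs).2
  have h := spannedEdges_triple H hab hac hbc
  have h3 : spannedEdges H {a, b, c} = 3 ↔ (spannedEdges H {a, b, c} : ℤ) = 3 := by norm_cast
  have h2 : spannedEdges H {a, b, c} = 2 ↔ (spannedEdges H {a, b, c} : ℤ) = 2 := by norm_cast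
  have ha : a ∉ ({b, c} : Finset V) := by simp [hab, hac]
  have hb : b ∉ ({c} : Finset V) := by simp [hbc]
  have h01 : ∀ x y, closedAdj H x y = 0 ∨ closedAdj H x y = 1 := by
    intro x y
    unfold closedAdj
    split_ifs <;> simp
  simp only [h2, h3, h, sum_insert ha, sum_insert hb, sum_singleton, hab, hac, hbc, hab.symm,
    hac.symm, hbc.symm, ne_eq, not_true_eq_false, not_false_eq_true, and_true,
    and_false, if_true, if_false, tripleWeight, closedAdj_comm H b a,
    closedAdj_comm H c a, closedAdj_comm H c b]
  rcases h01 a b with h1 | h1 <;> rcases h01 a c with h2 | h2 <;>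
    rcases h01 b c with h3 | h3 <;> simp [h1, h2, h3]

lemma closedTriples_eq (H : SimpleGraph V) :
    closedTriples H = 2 * (3 * nCount H 3 + 2 * nCount H 2) + 3 * closedPairs H
      - 2 * Fintype.card V := by
  classical
  have h : ∀ x y z, tripleWeight H x y z =
      (if x ≠ y ∧ x ≠ z ∧ y ≠ z then tripleWeight H x y z else 0) +
        (if x = y then closedAdj H x z else 0) + (if x = z then closedAdj H x y else 0) +
        (if y = z then closedAdj H x y else 0) - 2 * if x = y then (if x = z then 1 else 0) else 0 := by
    intro x y z
    unfold tripleWeight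
    by_cases h1 : x = y
    · subst h1
      by_cases h2 : x = z
      · subst h2
        simp [closedAdj_self]
      · simp [h2, closedAdj_self, closedAdj_mul_self]
    · by_cases h2 : x = z
      · subst h2
        simp [h1, Ne.symm h1, closedAdj_self]
      · by_cases h3 : y = z
        · subst h3
          simp [h1, closedAdj_self]
        · simp [h1, h2, h3]
  have hW := sum_congr rfl fun x (_ : x ∈ univ) => sum_congr rfl fun y (_ : y ∈ univ) =>
    sum_congr rfl fun z (_ : z ∈ univ) => h x y z
  change closedTriples H = _ at hW
  rw [hW]
  simp only [sum_add_distrib, sum_sub_distrib, ← mul_sum, sum_distinct_tripleWeight]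
  have h1 : ∑ x, ∑ y, ∑ z, (if x = y then closedAdj H x z else 0) = closedPairs H := by
    refine sum_congr rfl fun x _ => ?_
    rw [sum_comm]
    simp
  have h2 : ∑ x, ∑ y, ∑ z, (if x = z then closedAdj H x y else 0) = closedPairs H := by
    simp [closedPairs]
  have h3 : ∑ x, ∑ y, ∑ z, (if y = z then closedAdj H x y else 0) = closedPairs H := by
    simp [closedPairs]
  have h4 : ∑ x : V, ∑ y, ∑ z, (if x = y then (if x = z then 1 else 0) else 0 : ℤ) =
      Fintype.card V := by
    simp
  rw [h1, h2, h3, h4]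
  ring

end Counting

/-- For any finite simple graph `H` on `r ≥ 1` vertices with `e` edges, `n₃` triangles and `n₂`
three-element subsets spanning exactly two edges, and every `1 ≤ l ≤ r−1`, the point
`(e, 3n₃ + 2n₂)` lies on or above the line through `(x_l, y_l)` and `(x_{l+1}, y_{l+1})`. -/
theorem point_above_brokenLine {V : Type*} [Fintype V] (r : ℕ) (hr : 1 ≤ r)
    (H : SimpleGraph V) (hcard : Fintype.card V = r)
    (l : ℕ) (hl1 : 1 ≤ l) (hlr : l ≤ r - 1) :
    ((Nat.card H.edgeSet : ℝ) - (xCoord r (l + 1) : ℝ)) *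
        ((yCoord r l : ℝ) - (yCoord r (l + 1) : ℝ)) ≤
      ((3 * (nCount H 3 : ℝ) + 2 * (nCount H 2 : ℝ)) - (yCoord r (l + 1) : ℝ)) *
        ((xCoord r l : ℝ) - (xCoord r (l + 1) : ℝ)) := by
  subst hcard
  set r := Fintype.card V
  have hlr' : l < r := by omega
  have key := closedTriples_ge_of_balanced H hr
    (α := balancedSq r l - balancedSq r (l + 1)) (β := balancedCube r l - balancedCube r (l + 1))
    (c := (balancedSq r l - balancedSq r (l + 1)) * balancedCube r (l + 1)
      - (balancedCube r l - balancedCube r (l + 1)) * balancedSq r (l + 1))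
    (sub_pos.2 (balancedSq_succ_lt hl1 hlr')) fun k hk hkr => by
      linarith [balanced_above_chord hl1 hlr' hk hkr]
  rw [closedTriples_eq, closedPairs_eq] at key
  have hx := two_mul_xCoord r hl1
  have hx' := two_mul_xCoord r (Nat.succ_pos l)
  have hy := two_mul_yCoord r hl1
  have hy' := two_mul_yCoord r (Nat.succ_pos l)
  have hX : balancedSq r l = 2 * xCoord r l + r := by linarith
  have hX' : balancedSq r (l + 1) = 2 * xCoord r (l + 1) + r := by linarith
  have hY : balancedCube r l = 2 * yCoord r l + 3 * balancedSq r l - 2 * r := by linarith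
  have hY' : balancedCube r (l + 1) =
      2 * yCoord r (l + 1) + 3 * balancedSq r (l + 1) - 2 * r := by linarith
  rw [hY, hY', hX, hX'] at key
  have goal : ((Nat.card H.edgeSet : ℤ) - xCoord r (l + 1)) *
        (yCoord r l - yCoord r (l + 1)) ≤
      ((3 * nCount H 3 + 2 * nCount H 2) - yCoord r (l + 1)) *
        (xCoord r l - xCoord r (l + 1)) := by
    have : 0 ≤ 4 * (((3 * nCount H 3 + 2 * nCount H 2) - yCoord r (l + 1)) *
        (xCoord r l - xCoord r (l + 1)) - ((Nat.card H.edgeSet : ℤ) - xCoord r (l + 1)) *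
        (yCoord r l - yCoord r (l + 1))) := by
      linear_combination key
    linarith
  exact_mod_cast goal
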